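/- Let $d \ge 1$, let $V$ be a real vector space and let $B : V \times V \to \mathbb{R}$ be a symmetric bilinear form. Let $(b_0, b_1, \ldots, b_d)$ and $(f_0, f_1, \ldots, f_d)$ be families of vectors in $V$ with $B(b_\alpha, b_\beta) = \eta_{\alpha\beta}$ and $B(f_\alpha, f_\beta) = \eta_{\alpha\beta}$ for all $\alpha, \beta \in \{0, 1, \ldots, d\}$, and let $L$ be a real $(d+1) \times (d+1)$ matrix such that $f_\alpha = \sum_{\beta=0}^d L_{\alpha\beta} b_\beta$ for all $\alpha$. Then $\max_{\alpha, \beta} |L_{\alpha\beta}| \le |B(b_0, f_0)|$. -/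

import Mathlib

/-- The Minkowski metric matrix `η = diag(-1, 1, …, 1)` on `Fin (d+1)`. -/
noncomputable def minkowskiEta (d : ℕ) : Matrix (Fin (d + 1)) (Fin (d + 1)) ℝ :=
  Matrix.diagonal (fun i => if i = 0 then (-1 : ℝ) else 1)

/-!
If `M` is a Lorentz matrix, `M η Mᵀ = η`, then `η Mᵀ η` is a right inverse of `M`, hence also a left
inverse, so `Mᵀ` is a Lorentz matrix as well. Let `o` be the timelike index. The diagonal entries of
`M η Mᵀ = η` say that the squares of the spacelike entries of row `i` add up to `M i o ^ 2 + η i i`,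
and those of `Mᵀ η M = η` say the same for columns. Column `o` gives
`M i o ^ 2 + η i i ≤ M o o ^ 2`, and row `i` then bounds its remaining entries by `|M o o|`.
For the matrix that takes `b` to `f`, this entry is `-B (b o) (f o)`.
-/

open Matrix

theorem mul_mul_eq_of_mul_mul_eq {G : Type*} [Monoid G] [IsDedekindFiniteMonoid G] {a b u v : G}
    (huv : u * v = 1) (h : a * u * b = u) : b * v * a = v := by
  have right_inv : a * (u * b * v) = 1 := by
    rw [← mul_assoc, ← mul_assoc, h, huv]
  have left_inv : u * b * v * a = 1 := mul_eq_one_comm.mp right_inv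
  calc b * v * a = v * u * (b * v * a) := by rw [mul_eq_one_comm.mp huv, one_mul]
    _ = v * (u * b * v * a) := by simp only [mul_assoc]
    _ = v := by rw [left_inv, mul_one]

theorem bilin_sum_smul_eq_mul_mul_transpose {ι κ R V : Type*} [Fintype ι] [CommSemiring R]
    [AddCommMonoid V] [Module R V] (B : LinearMap.BilinForm R V) (b : ι → V) (L : Matrix κ ι R) :
    (of fun α β => B (∑ i, L α i • b i) (∑ j, L β j • b j)) =
      L * (of fun i j => B (b i) (b j)) * Lᵀ := by
  ext α β
  simp only [of_apply, map_sum, map_smul, LinearMap.sum_apply, LinearMap.smul_apply, smul_eq_mul,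
    mul_apply, transpose_apply, Finset.sum_mul, Finset.mul_sum]
  exact Finset.sum_congr rfl fun j _ => Finset.sum_congr rfl fun i _ => by ring

section LorentzMetric

variable {ι R : Type*} [DecidableEq ι] [CommRing R]

variable (R) in
/-- The Lorentzian metric matrix `η` over `R`: diagonal, with entry `-1` at the timelike index `o`
and `1` at every other index. -/
def lorentzMetric (o : ι) : Matrix ι ι R :=
  diagonal fun i => if i = o then -1 else 1

theorem lorentzMetric_apply_self (o : ι) : lorentzMetric R o o o = -1 := by
  simp [lorentzMetric]

theorem lorentzMetric_apply_of_ne {o i : ι} (hi : i ≠ o) : lorentzMetric R o i i = 1 := by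
  simp [lorentzMetric, hi]

variable [Fintype ι]

theorem lorentzMetric_mul_self (o : ι) : lorentzMetric R o * lorentzMetric R o = 1 := by
  rw [lorentzMetric, diagonal_mul_diagonal, ← diagonal_one]
  congr 1 with i
  split_ifs <;> simp

/-- Lorentz matrices, `M η Mᵀ = η`: the changes of basis, with the new basis vectors as rows, that
preserve the metric matrix with timelike index `o`. -/
def IsLorentz (o : ι) (M : Matrix ι ι R) : Prop :=
  M * lorentzMetric R o * Mᵀ = lorentzMetric R o

namespace IsLorentz

variable {o : ι} {M : Matrix ι ι R}

theorem transpose (hM : IsLorentz o M) : IsLorentz o Mᵀ := by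
  rw [IsLorentz, transpose_transpose]
  exact mul_mul_eq_of_mul_mul_eq (lorentzMetric_mul_self o) hM

theorem sum_sq_spacelike (hM : IsLorentz o M) (i : ι) :
    ∑ j ∈ {o}ᶜ, M i j ^ 2 = M i o ^ 2 + lorentzMetric R o i i := by
  have diag : ∑ j, M i j * (if j = o then -1 else 1) * M i j = lorentzMetric R o i i := by
    rw [← congrFun₂ hM i i, mul_apply]
    simp only [lorentzMetric, mul_diagonal, transpose_apply]
  have spacelike : ∑ j ∈ {o}ᶜ, M i j * (if j = o then -1 else 1) * M i j =
      ∑ j ∈ {o}ᶜ, M i j ^ 2 :=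
    Finset.sum_congr rfl fun j hj => by
      rw [if_neg (by simpa using hj), mul_one, sq]
  rw [Fintype.sum_eq_add_sum_compl o, spacelike, if_pos rfl] at diag
  linear_combination diag

variable [LinearOrder R] [IsStrictOrderedRing R]

theorem sq_le_of_ne (hM : IsLorentz o M) (i : ι) {j : ι} (hj : j ≠ o) :
    M i j ^ 2 ≤ M i o ^ 2 + lorentzMetric R o i i := by
  rw [← hM.sum_sq_spacelike i]
  exact Finset.single_le_sum (f := fun j => M i j ^ 2) (fun _ _ => sq_nonneg _) (by simpa using hj)

theorem sq_timelike_add_le (hM : IsLorentz o M) (i : ι) :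
    M i o ^ 2 + lorentzMetric R o i i ≤ M o o ^ 2 := by
  rcases eq_or_ne i o with rfl | hi
  · rw [lorentzMetric_apply_self]
    linarith
  · have column := hM.transpose.sq_le_of_ne o hi
    rw [transpose_apply, transpose_apply, lorentzMetric_apply_self] at column
    rw [lorentzMetric_apply_of_ne hi]
    linarith

theorem abs_apply_le (hM : IsLorentz o M) (i j : ι) : |M i j| ≤ |M o o| := by
  rw [← sq_le_sq]
  rcases eq_or_ne j o with rfl | hj
  · rcases eq_or_ne i j with rfl | hi
    · exact le_rfl
    · have timelike := hM.sq_timelike_add_le i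
      rw [lorentzMetric_apply_of_ne hi] at timelike
      linarith
  · exact (hM.sq_le_of_ne i hj).trans (hM.sq_timelike_add_le i)

end IsLorentz

section Basis

variable {V : Type*} [AddCommMonoid V] [Module R V] {B : LinearMap.BilinForm R V} {o : ι}
  {b f : ι → V} {L : Matrix ι ι R}

theorem isLorentz_of_orthonormal (hb : ∀ α β, B (b α) (b β) = lorentzMetric R o α β)
    (hf : ∀ α β, B (f α) (f β) = lorentzMetric R o α β) (hL : ∀ α, f α = ∑ β, L α β • b β) :
    IsLorentz o L := by
  have gram := bilin_sum_smul_eq_mul_mul_transpose B b L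
  simp only [← hL, hb, hf] at gram
  exact gram.symm

theorem bilin_timelike_eq_neg (hb : ∀ α β, B (b α) (b β) = lorentzMetric R o α β)
    (hL : ∀ α, f α = ∑ β, L α β • b β) : B (b o) (f o) = -L o o := by
  simp [hL, hb, lorentzMetric, diagonal_apply]

theorem lorentz_transformation_entry_bound_general [LinearOrder R] [IsStrictOrderedRing R]
    (hb : ∀ α β, B (b α) (b β) = lorentzMetric R o α β)
    (hf : ∀ α β, B (f α) (f β) = lorentzMetric R o α β)
    (hL : ∀ α, f α = ∑ β, L α β • b β) (α β : ι) :
    |L α β| ≤ |B (b o) (f o)| := by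
  rw [bilin_timelike_eq_neg hb hL, abs_neg]
  exact (isLorentz_of_orthonormal hb hf hL).abs_apply_le α β

end Basis

end LorentzMetric

/-- Lemma 3.1: the Lorentz transformation relating two orthonormal bases of a
Lorentzian inner product is bounded entrywise by the inner product of the two
timelike basis vectors. -/
theorem lorentz_transformation_entry_bound
    (d : ℕ) (hd : 1 ≤ d) (V : Type*) [AddCommGroup V] [Module ℝ V]
    (B : LinearMap.BilinForm ℝ V) (hBsymm : ∀ x y : V, B x y = B y x)
    (b f : Fin (d + 1) → V)
    (hb : ∀ α β, B (b α) (b β) = minkowskiEta d α β)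
    (hf : ∀ α β, B (f α) (f β) = minkowskiEta d α β)
    (L : Matrix (Fin (d + 1)) (Fin (d + 1)) ℝ)
    (hL : ∀ α, f α = ∑ β, L α β • b β) :
    ∀ α β, |L α β| ≤ |B (b 0) (f 0)| :=
  lorentz_transformation_entry_bound_general hb hf hL
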